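/- arXiv:2502.13112 — 2 statements merged into one kernel-verified Lean document; each statement's English description precedes it below -/
import Mathlib

section
/- Under (A1)–(A4), suppose T ≥ 1, the initial action satisfies g(x_1) ≤ −α for some α ∈ (0, ε], and the algorithm is run with parameters ρ = α/√T and η = ξ·ρ/(G_f·G_g). Then the iterates satisfy g(x_t) ≤ 0 for all t ∈ {1,…,T}. -/
open scoped RealInnerProductSpace Classical

noncomputable def projBall {d : ℕ} (R : ℝ) (v : EuclideanSpace ℝ (Fin d)) :
    EuclideanSpace ℝ (Fin d) := (R / max R ‖v‖) • v

def IsSubgradAt {d : ℕ} (g : EuclideanSpace ℝ (Fin d) → ℝ)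
    (x s : EuclideanSpace ℝ (Fin d)) : Prop :=
  ∀ y, g x + ⟪s, y - x⟫ ≤ g y

theorem aux_proj {d : ℕ} (g : EuclideanSpace ℝ (Fin d) → ℝ)
    (hg : ConvexOn ℝ Set.univ g) (c : ℝ) (hne : ∃ z, g z ≤ c) (x : EuclideanSpace ℝ (Fin d)) :
    ∃ q, g q ≤ c ∧ ∀ w, g w ≤ c → ⟪x - q, w - q⟫ ≤ 0 := by
  have hcont : Continuous g := by
    rw [← continuousOn_univ]
    exact hg.continuousOn isOpen_univ
  have hcl : IsClosed {z | g z ≤ c} := isClosed_le hcont continuous_const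
  have hconv : Convex ℝ {z | g z ≤ c} := by
    have := hg.convex_le c
    simpa using this
  obtain ⟨q, hq, hq2⟩ := exists_norm_eq_iInf_of_complete_convex (K := {z | g z ≤ c}) hne
    hcl.isComplete hconv x
  exact ⟨q, hq, fun w hw => (norm_eq_iInf_iff_real_inner_le_zero hconv hq).1 hq2 w hw⟩

theorem aux_comb {d : ℕ} (g : EuclideanSpace ℝ (Fin d) → ℝ)
    (hg : ConvexOn ℝ Set.univ g) (u v : EuclideanSpace ℝ (Fin d)) (l : ℝ) (h0 : 0 ≤ l)
    (h1 : l ≤ 1) : g (u + l • (v - u)) ≤ g u + l * (g v - g u) := by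
  have h := hg.2 (Set.mem_univ u) (Set.mem_univ v) (sub_nonneg.2 h1) h0 (by ring)
  have e : (1 - l) • u + l • v = u + l • (v - u) := by module
  rw [e] at h
  simp only [smul_eq_mul] at h
  linarith

theorem aux_growth {d : ℕ} (g : EuclideanSpace ℝ (Fin d) → ℝ)
    (hg : ConvexOn ℝ Set.univ g) {ε σ : ℝ} (hσ : 0 < σ)
    (hne : ∃ z, g z = -ε)
    (hA4 : ∀ z : EuclideanSpace ℝ (Fin d), g z = -ε → ∀ sz, IsSubgradAt g z sz → σ ≤ ‖sz‖)
    (x : EuclideanSpace ℝ (Fin d)) (hx : -ε < g x) :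
    ∃ q, g q = -ε ∧ σ * ‖x - q‖ ≤ g x + ε := by
  obtain ⟨q, hq, hqw⟩ := aux_proj g hg (-ε) (hne.imp fun z hz => hz.le) x
  have hxq : x - q ≠ 0 := by
    intro h
    rw [sub_eq_zero] at h
    subst h
    linarith
  have hn : 0 < ‖x - q‖ := norm_pos_iff.2 hxq
  have hnn : ⟪x - q, x - q⟫ = ‖x - q‖ ^ 2 := real_inner_self_eq_norm_sq _
  -- strictly outside halfspace
  have hout : ∀ w, 0 < ⟪x - q, w - q⟫ → -ε < g w := by
    intro w hw
    by_contra hcon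
    push Not at hcon
    linarith [hqw w hcon]
  have hqe : g q = -ε := by
    refine le_antisymm hq ?_
    by_contra hlt
    push Not at hlt
    have hd : 0 < g x - g q := by linarith
    have hl0 : 0 < (-ε - g q) / (g x - g q) := div_pos (by linarith) hd
    have hl1 : (-ε - g q) / (g x - g q) ≤ 1 := by rw [div_le_one hd]; linarith
    have h := aux_comb g hg q x _ hl0.le hl1
    rw [div_mul_cancel₀ _ hd.ne'] at h
    have h2 := hout (q + ((-ε - g q) / (g x - g q)) • (x - q)) (by
      rw [add_sub_cancel_left, inner_smul_right, hnn]; positivity)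
    linarith
  have hge : ∀ w, ⟪x - q, w - q⟫ = 0 → -ε ≤ g w := by
    intro w hw
    by_contra hlt
    push Not at hlt
    have hd : 0 < g x - g w := by linarith
    have hl0 : 0 < (-ε - g w) / (g x - g w) := div_pos (by linarith) hd
    have hl1 : (-ε - g w) / (g x - g w) ≤ 1 := by rw [div_le_one hd]; linarith
    have h := aux_comb g hg w x _ hl0.le hl1
    rw [div_mul_cancel₀ _ hd.ne'] at h
    have h2 := hout (w + ((-ε - g w) / (g x - g w)) • (x - w)) (by
      have e : w + ((-ε - g w) / (g x - g w)) • (x - w) - q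
        = (w - q) + ((-ε - g w) / (g x - g w)) • ((x - q) - (w - q)) := by module
      rw [e, inner_add_right, inner_smul_right, inner_sub_right _ (x - q) (w - q), hnn, hw]
      simp only [zero_add, sub_zero]; positivity)
    linarith
  have hcmp : ∀ z1 z2, 0 < ⟪x - q, z1 - q⟫ → ⟪x - q, z2 - q⟫ < 0 →
      (g z2 - g q) / ⟪x - q, z2 - q⟫ ≤ (g z1 - g q) / ⟪x - q, z1 - q⟫ := by
    intro z1 z2 h1 h2
    set a := ⟪x - q, z1 - q⟫ with ha
    set b := ⟪x - q, z2 - q⟫ with hb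
    have hab : 0 < a - b := by linarith
    have hl0 : 0 ≤ a / (a - b) := by positivity
    have hl1 : a / (a - b) ≤ 1 := by rw [div_le_one hab]; linarith
    have h := aux_comb g hg z1 z2 _ hl0 hl1
    have h3 := hge (z1 + (a / (a - b)) • (z2 - z1)) (by
      have e : z1 + (a / (a - b)) • (z2 - z1) - q
        = (z1 - q) + (a / (a - b)) • ((z2 - q) - (z1 - q)) := by module
      rw [e, inner_add_right, inner_smul_right, inner_sub_right _ (z2 - q) (z1 - q), ← ha, ← hb]
      field_simp; ring)
    have h4 : -ε ≤ g z1 + a / (a - b) * (g z2 - g z1) := h3.trans h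
    have h5 : 0 ≤ (g z1 - g q) * (-b) + a * (g z2 - g q) := by
      have : (g z1 + a / (a - b) * (g z2 - g z1) + ε) * (a - b)
        = (g z1 - g q) * (-b) + a * (g z2 - g q) := by
        rw [hqe]; field_simp; ring
      rw [← this]
      exact mul_nonneg (by linarith) hab.le
    rw [← neg_div_neg_eq, div_le_div_iff₀ (by linarith) h1]
    linarith
  set S := (fun z => (g z - g q) / ⟪x - q, z - q⟫) '' {z | 0 < ⟪x - q, z - q⟫} with hS
  have hxS : 0 < ⟪x - q, x - q⟫ := by rw [hnn]; positivity
  have hSne : S.Nonempty := ⟨_, x, hxS, rfl⟩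
  have hS0 : ∀ r ∈ S, 0 ≤ r := by
    rintro _ ⟨z, hz, rfl⟩
    have hz' : 0 < ⟪x - q, z - q⟫ := hz
    exact div_nonneg (by linarith [hout z hz']) hz'.le
  have hbdd : BddBelow S := ⟨0, fun r hr => hS0 r hr⟩
  set m := sInf S with hm
  have hm0 : 0 ≤ m := le_csInf hSne hS0
  have hsub : IsSubgradAt g q (m • (x - q)) := by
    intro z
    rw [real_inner_smul_left]
    rcases lt_trichotomy ⟪x - q, z - q⟫ 0 with h | h | h
    · have h1 : (g z - g q) / ⟪x - q, z - q⟫ ≤ m := by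
        apply le_csInf hSne
        rintro _ ⟨w, hw, rfl⟩
        exact hcmp w z hw h
      rw [div_le_iff_of_neg h] at h1
      linarith
    · rw [h, mul_zero]
      linarith [hge z h]
    · have h1 : m ≤ (g z - g q) / ⟪x - q, z - q⟫ := csInf_le hbdd ⟨z, h, rfl⟩
      rw [le_div_iff₀ h] at h1
      linarith
  have h1 := hA4 q hqe _ hsub
  rw [norm_smul, Real.norm_of_nonneg hm0] at h1
  have h2 := hsub x
  rw [real_inner_smul_left, hnn, hqe] at h2
  refine ⟨q, hqe, ?_⟩
  nlinarith

theorem aux_errbound {d : ℕ} (g : EuclideanSpace ℝ (Fin d) → ℝ)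
    (hg : ConvexOn ℝ Set.univ g) {ε σ ρ : ℝ} (hσ : 0 < σ) (hρε : ρ ≤ ε)
    (hne : ∃ z, g z = -ε)
    (hA4 : ∀ z : EuclideanSpace ℝ (Fin d), g z = -ε → ∀ sz, IsSubgradAt g z sz → σ ≤ ‖sz‖)
    (x : EuclideanSpace ℝ (Fin d)) :
    ∃ p, g p ≤ -ρ ∧ σ * ‖x - p‖ ≤ max (g x + ρ) 0 := by
  by_cases hx : g x ≤ -ρ
  · exact ⟨x, hx, by simp⟩
  push Not at hx
  obtain ⟨q, hq, hq2⟩ := aux_growth g hg hσ hne hA4 x (by linarith)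
  have hd : 0 < g x + ε := by linarith
  have hl0 : 0 ≤ (g x + ρ) / (g x + ε) := div_nonneg (by linarith) hd.le
  have hl1 : (g x + ρ) / (g x + ε) ≤ 1 := by rw [div_le_one hd]; linarith
  have h := aux_comb g hg x q _ hl0 hl1
  refine ⟨_, h.trans ?_, ?_⟩
  · rw [hq]
    have : (g x + ρ) / (g x + ε) * (-ε - g x) = -(g x + ρ) := by field_simp; ring
    linarith
  · refine le_trans ?_ (le_max_left _ _)
    have e : x - (x + ((g x + ρ) / (g x + ε)) • (q - x)) = ((g x + ρ) / (g x + ε)) • (x - q) := by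
      module
    rw [e, norm_smul, Real.norm_of_nonneg hl0]
    calc σ * ((g x + ρ) / (g x + ε) * ‖x - q‖) = (g x + ρ) / (g x + ε) * (σ * ‖x - q‖) := by ring
      _ ≤ (g x + ρ) / (g x + ε) * (g x + ε) := by gcongr
      _ = g x + ρ := by field_simp

theorem aux_ball_mem {d : ℕ} {R : ℝ} (hR : 0 < R) (v : EuclideanSpace ℝ (Fin d)) :
    ‖projBall R v‖ ≤ R := by
  unfold projBall
  have hm : 0 < max R ‖v‖ := lt_max_of_lt_left hR
  rw [norm_smul, Real.norm_of_nonneg (by positivity), div_mul_eq_mul_div, div_le_iff₀ hm]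
  gcongr
  exact le_max_right _ _

theorem aux_ball {d : ℕ} {R : ℝ} (hR : 0 < R) (v p : EuclideanSpace ℝ (Fin d)) (hp : ‖p‖ ≤ R) :
    ‖projBall R v - p‖ ≤ ‖v - p‖ := by
  unfold projBall
  rcases le_total ‖v‖ R with h | h
  · rw [max_eq_left h, div_self hR.ne', one_smul]
  · rw [max_eq_right h]
    have hv : 0 < ‖v‖ := by linarith
    have hc1 : R / ‖v‖ ≤ 1 := by rw [div_le_one hv]; exact h
    have hcv : R / ‖v‖ * ‖v‖ = R := by field_simp
    set c := R / ‖v‖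
    apply le_of_sq_le_sq _ (norm_nonneg _)
    rw [norm_sub_sq_real, norm_sub_sq_real, real_inner_smul_left, norm_smul,
      Real.norm_of_nonneg (by positivity : 0 ≤ c), hcv]
    have hi : ⟪v, p⟫ ≤ ‖v‖ * R := (real_inner_le_norm v p).trans (by gcongr)
    have h1 : 0 ≤ (1 - c) * (‖v‖ * R - ⟪v, p⟫) := mul_nonneg (by linarith) (by linarith)
    have h2 : c * (‖v‖ * R) = R ^ 2 := by rw [← mul_assoc, hcv]; ring
    nlinarith [sq_nonneg (‖v‖ - R)]

theorem aux_nonexp {d : ℕ} (s x u v : EuclideanSpace ℝ (Fin d)) (hs : s ≠ 0) (a : ℝ) :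
    ‖(u - ((max (a + ⟪s, u - x⟫) 0) / ‖s‖ ^ 2) • s) - (v - ((max (a + ⟪s, v - x⟫) 0) / ‖s‖ ^ 2) • s)‖
      ≤ ‖u - v‖ := by
  have hn : 0 < ‖s‖ := norm_pos_iff.2 hs
  have hi : ⟪s, u - v⟫ = (a + ⟪s, u - x⟫) - (a + ⟪s, v - x⟫) := by
    simp only [inner_sub_right]; ring
  set A := a + ⟪s, u - x⟫
  set B := a + ⟪s, v - x⟫
  have e : (u - (max A 0 / ‖s‖ ^ 2) • s) - (v - (max B 0 / ‖s‖ ^ 2) • s)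
    = (u - v) - ((max A 0 - max B 0) / ‖s‖ ^ 2) • s := by
    rw [sub_div]; module
  apply le_of_sq_le_sq _ (norm_nonneg _)
  rw [e, norm_sub_sq_real, inner_smul_right, real_inner_comm, hi, norm_smul, mul_pow,
    Real.norm_eq_abs, sq_abs]
  have h1 : (max A 0 - max B 0) ^ 2 ≤ (max A 0 - max B 0) * (A - B) := by
    rcases le_total A 0 with h | h <;> rcases le_total B 0 with h' | h' <;>
      simp only [max_eq_left, max_eq_right, h, h'] <;> nlinarith
  have h2 : ((max A 0 - max B 0) / ‖s‖ ^ 2) ^ 2 * ‖s‖ ^ 2 = (max A 0 - max B 0) ^ 2 / ‖s‖ ^ 2 := by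
    field_simp
  have h3 : (max A 0 - max B 0) ^ 2 / ‖s‖ ^ 2 ≤ (max A 0 - max B 0) / ‖s‖ ^ 2 * (A - B) := by
    rw [div_mul_eq_mul_div]; gcongr
  have h4 : 0 ≤ (max A 0 - max B 0) ^ 2 / ‖s‖ ^ 2 := by positivity
  rw [h2]
  linarith

theorem aux_polyak {d : ℕ} (s x p : EuclideanSpace ℝ (Fin d)) (hs : s ≠ 0) {a σ Gg : ℝ}
    (hσ : 0 < σ) (hGg : 0 < Gg) (hsG : ‖s‖ ≤ Gg)
    (hp : a ≤ ⟪s, x - p⟫) (hd : σ * ‖x - p‖ ≤ max a 0) :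
    ‖x - (max a 0 / ‖s‖ ^ 2) • s - p‖ ≤ Real.sqrt (1 - σ ^ 2 / Gg ^ 2) * ‖x - p‖ := by
  have hn : 0 < ‖s‖ := norm_pos_iff.2 hs
  have e : x - (max a 0 / ‖s‖ ^ 2) • s - p = (x - p) - (max a 0 / ‖s‖ ^ 2) • s := by abel
  rw [← Real.sqrt_sq (norm_nonneg (x - p)), ← Real.sqrt_mul' _ (sq_nonneg _)]
  apply Real.le_sqrt_of_sq_le
  rw [e, norm_sub_sq_real, inner_smul_right, real_inner_comm, norm_smul, mul_pow,
    Real.norm_eq_abs, sq_abs]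
  set w := max a 0 with hw
  have hw0 : 0 ≤ w := le_max_right _ _
  have h1 : w ^ 2 ≤ w * ⟪s, x - p⟫ := by
    rcases le_total a 0 with h | h
    · simp [hw, max_eq_right h]
    · have : w = a := max_eq_left h
      rw [this] at hw0 ⊢
      nlinarith
  have h2 : (w / ‖s‖ ^ 2) ^ 2 * ‖s‖ ^ 2 = w ^ 2 / ‖s‖ ^ 2 := by field_simp
  have h3 : w ^ 2 / ‖s‖ ^ 2 ≤ w / ‖s‖ ^ 2 * ⟪s, x - p⟫ := by
    rw [div_mul_eq_mul_div]; gcongr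
  have h4 : σ ^ 2 / Gg ^ 2 * ‖x - p‖ ^ 2 ≤ w ^ 2 / ‖s‖ ^ 2 := by
    rw [div_mul_eq_mul_div, ← mul_pow]
    gcongr
  rw [h2]
  linarith

theorem stmt2 {d T : ℕ} (hT : 1 ≤ T)
    {R Gf Gg ε σ η ρ α : ℝ}
    (g : EuclideanSpace ℝ (Fin d) → ℝ)
    (f : ℕ → EuclideanSpace ℝ (Fin d) → ℝ)
    (x y s : ℕ → EuclideanSpace ℝ (Fin d))
    (hR : 0 < R) (hGf : 0 < Gf) (hGg : 0 < Gg)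
    (hgconv : ConvexOn ℝ Set.univ g)
    (hA1 : {z : EuclideanSpace ℝ (Fin d) | g z ≤ 0} ⊆ Metric.closedBall 0 R)
    (hfconv : ∀ t ∈ Finset.Icc 1 T, ConvexOn ℝ Set.univ (f t))
    (hfdiff : ∀ t ∈ Finset.Icc 1 T, Differentiable ℝ (f t))
    (hA2 : ∀ t ∈ Finset.Icc 1 T, ∀ z ∈ Metric.closedBall (0 : EuclideanSpace ℝ (Fin d)) R,
      ‖gradient (f t) z‖ ≤ Gf)
    (hA3 : ∀ z ∈ Metric.closedBall (0 : EuclideanSpace ℝ (Fin d)) R,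
      ∀ sz, IsSubgradAt g z sz → ‖sz‖ ≤ Gg)
    (hσ : 0 < σ) (hε : 0 < ε) (hσGg : σ ≤ Gg)
    (hA4ne : ∃ z, g z = -ε)
    (hA4 : ∀ z : EuclideanSpace ℝ (Fin d), g z = -ε → ∀ sz, IsSubgradAt g z sz → σ ≤ ‖sz‖)
    (hα : 0 < α) (hαε : α ≤ ε)
    (hx1g : g (x 1) ≤ -α)
    (hρdef : ρ = α / Real.sqrt T)
    (hηdef : η = (1 - Real.sqrt (1 - σ ^ 2 / Gg ^ 2)) * ρ / (Gf * Gg))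
    (hs : ∀ t ∈ Finset.Icc 1 T, IsSubgradAt g (x t) (s t))
    (hy : ∀ t ∈ Finset.Icc 1 T, y t = x t - η • gradient (f t) (x t))
    (hupd : ∀ t ∈ Finset.Icc 1 T,
      x (t + 1) = if s t ≠ 0 then
          projBall R (y t - ((max (g (x t) + ⟪s t, y t - x t⟫ + ρ) 0) / ‖s t‖ ^ 2) • s t)
        else projBall R (y t))
    :
    ∀ t ∈ Finset.Icc 1 T, g (x t) ≤ 0 := by
  have hT' : (1 : ℝ) ≤ Real.sqrt T := by
    rw [Real.one_le_sqrt]; exact_mod_cast hT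
  have hρ : 0 < ρ := by rw [hρdef]; positivity
  have hρα : ρ ≤ α := by rw [hρdef]; exact div_le_self hα.le hT'
  have hratio : 0 < σ ^ 2 / Gg ^ 2 := by positivity
  have hγ : Real.sqrt (1 - σ ^ 2 / Gg ^ 2) ≤ 1 := by
    exact Real.sqrt_le_iff.2 ⟨zero_le_one, by linarith⟩
  set k := Real.sqrt (1 - σ ^ 2 / Gg ^ 2) with hk
  have hk0 : 0 ≤ k := Real.sqrt_nonneg _
  have hη0 : 0 ≤ η := by
    rw [hηdef]
    exact div_nonneg (mul_nonneg (by linarith) hρ.le) (by positivity)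
  have hηG : η * Gf = (1 - k) * (ρ / Gg) := by
    rw [hηdef]; field_simp
  have hD : 0 < ρ / Gg := by positivity
  have hball : ∀ z, g z ≤ 0 → ‖z‖ ≤ R := fun z hz => by simpa using hA1 hz
  have inv : ∀ t, 1 ≤ t → t ≤ T → ‖x t‖ ≤ R ∧ ∃ p, g p ≤ -ρ ∧ ‖x t - p‖ ≤ ρ / Gg := by
    intro t ht
    induction t, ht using Nat.le_induction with
    | base =>
      intro _
      exact ⟨hball _ (by linarith), x 1, by linarith, by simpa using hD.le⟩
    | succ t ht ih =>
      intro htT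
      have hmem : t ∈ Finset.Icc 1 T := Finset.mem_Icc.2 ⟨ht, by omega⟩
      obtain ⟨hxR, p0, hp0, hp0d⟩ := ih (by omega)
      have hyx : ‖y t - x t‖ ≤ (1 - k) * (ρ / Gg) := by
        rw [hy t hmem, sub_sub_cancel_left, norm_neg, norm_smul, Real.norm_of_nonneg hη0, ← hηG]
        gcongr
        exact hA2 t hmem _ (by simpa using hxR)
      have hst := hs t hmem
      have hsG := hA3 (x t) (by simpa using hxR) _ hst
      rw [hupd t hmem]
      by_cases h0 : s t = 0
      · rw [if_neg (by simpa using h0)]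
        refine ⟨aux_ball_mem hR _, x t, ?_, ?_⟩
        · have := hst (x 1)
          rw [h0, inner_zero_left] at this
          linarith
        · refine (aux_ball hR _ _ hxR).trans (hyx.trans ?_)
          nlinarith
      · rw [if_pos h0]
        refine ⟨aux_ball_mem hR _, ?_⟩
        obtain ⟨p, hp, hpd, hpe⟩ : ∃ p, g p ≤ -ρ ∧ ‖x t - p‖ ≤ ρ / Gg ∧
            σ * ‖x t - p‖ ≤ max (g (x t) + ρ) 0 := by
          obtain ⟨p', hp', hpe'⟩ := aux_errbound g hgconv hσ (hρα.trans hαε) hA4ne hA4 (x t)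
          by_cases hc : σ * ‖x t - p0‖ ≤ max (g (x t) + ρ) 0
          · exact ⟨p0, hp0, hp0d, hc⟩
          · push Not at hc
            refine ⟨p', hp', ?_, hpe'⟩
            have := lt_of_mul_lt_mul_left (hpe'.trans_lt hc) hσ.le
            linarith
        refine ⟨p, hp, (aux_ball hR _ _ (hball p (by linarith))).trans ?_⟩
        have h1 := aux_nonexp (s t) (x t) (y t) (x t) h0 (g (x t) + ρ)
        rw [sub_self (x t), inner_zero_right, add_zero] at h1
        have h2 := aux_polyak (s t) (x t) p h0 (a := g (x t) + ρ) hσ hGg hsG (by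
          have := hst p
          rw [← neg_sub, inner_neg_right] at this
          linarith) hpe
        rw [← hk] at h2
        have e : g (x t) + ⟪s t, y t - x t⟫ + ρ = g (x t) + ρ + ⟪s t, y t - x t⟫ := by ring
        rw [e]
        have h3 := norm_sub_le_norm_sub_add_norm_sub
          (y t - ((max (g (x t) + ρ + ⟪s t, y t - x t⟫) 0) / ‖s t‖ ^ 2) • s t)
          (x t - ((max (g (x t) + ρ) 0) / ‖s t‖ ^ 2) • s t) p
        have h4 : k * ‖x t - p‖ ≤ k * (ρ / Gg) := by gcongr
        linarith
  intro t ht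
  obtain ⟨h1, h2⟩ := Finset.mem_Icc.1 ht
  obtain ⟨hxR, p, hp, hpd⟩ := inv t h1 h2
  have hst := hs t ht
  have hsG := hA3 (x t) (by simpa using hxR) _ hst
  have h3 := hst p
  rw [← neg_sub, inner_neg_right] at h3
  have h4 : ⟪s t, x t - p⟫ ≤ Gg * (ρ / Gg) :=
    (real_inner_le_norm _ _).trans (by gcongr)
  rw [mul_div_cancel₀ _ hGg.ne'] at h4
  linarith
end

section
/- Under (A1)–(A4), suppose T ≥ 1, x_1 ∈ RB, and the algorithm is run with parameters η = 2R/(G_f·√T) and ρ = 0. Then: (i) for every point x* with g(x*) ≤ 0, ∑_{t=1}^T (f_t(x_t) − f_t(x*)) ≤ 2·R·G_f·√T; and (ii) for all t ∈ {1,…,T}, g(x_t) ≤ 2·R·G_g·exp(−σ²·(t−1)/(2·G_g²)) + 2·R·G_g/(ξ·√T). -/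
open scoped RealInnerProductSpace Classical

section helpers

variable {d : ℕ}

local notation "E" => EuclideanSpace ℝ (Fin d)

theorem norm_projBall_le {R : ℝ} (hR : 0 < R) (v : E) : ‖projBall R v‖ ≤ R := by
  unfold projBall
  have hm : 0 < max R ‖v‖ := lt_max_of_lt_left hR
  rw [norm_smul, Real.norm_eq_abs, abs_of_nonneg (by positivity), div_mul_eq_mul_div,
    div_le_iff₀ hm]
  exact mul_le_mul_of_nonneg_left (le_max_right _ _) hR.le

theorem projBall_dist {R : ℝ} (hR : 0 < R) (v w : E) (hw : ‖w‖ ≤ R) :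
    ‖projBall R v - w‖ ≤ ‖v - w‖ := by
  unfold projBall
  rcases le_total ‖v‖ R with h | h
  · rw [max_eq_left h, div_self hR.ne', one_smul]
  · rw [max_eq_right h]
    have hv : 0 < ‖v‖ := hR.trans_le h
    set k := R / ‖v‖ with hk
    have hkv : k * ‖v‖ = R := by rw [hk]; field_simp
    have hk1 : k ≤ 1 := by rw [hk, div_le_one hv]; exact h
    have hk0 : 0 < k := by positivity
    have hin : ⟪v, w⟫ ≤ k * ‖v‖ ^ 2 := by
      calc ⟪v, w⟫ ≤ ‖v‖ * ‖w‖ := real_inner_le_norm _ _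
        _ ≤ ‖v‖ * R := by gcongr
        _ = k * ‖v‖ ^ 2 := by rw [← hkv]; ring
    apply le_of_sq_le_sq _ (norm_nonneg _)
    rw [norm_sub_sq_real, norm_sub_sq_real, norm_smul, inner_smul_left, Real.norm_eq_abs,
      abs_of_pos hk0]
    simp only [conj_trivial]
    nlinarith [mul_nonneg (sub_nonneg.2 hk1) (sub_nonneg.2 hin),
      mul_nonneg (mul_nonneg (sub_nonneg.2 hk1) (sub_nonneg.2 hk1)) (sq_nonneg ‖v‖)]

/-- the half-space projection -/
noncomputable def hproj (c : ℝ) (s x y : E) : E :=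
  y - ((max (c + ⟪s, y - x⟫) 0) / ‖s‖ ^ 2) • s

theorem hproj_nonexp (c : ℝ) (s x y w : E) (hs : s ≠ 0) :
    ‖hproj c s x y - hproj c s x w‖ ≤ ‖y - w‖ := by
  unfold hproj
  have hn : 0 < ‖s‖ ^ 2 := by positivity
  have hab : ⟪y - w, s⟫ = (c + ⟪s, y - x⟫) - (c + ⟪s, w - x⟫) := by
    rw [real_inner_comm]
    simp only [inner_sub_right]; ring
  set a := c + ⟪s, y - x⟫
  set b := c + ⟪s, w - x⟫
  have e : y - (max a 0 / ‖s‖ ^ 2) • s - (w - (max b 0 / ‖s‖ ^ 2) • s)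
      = (y - w) - ((max a 0 - max b 0) / ‖s‖ ^ 2) • s := by
    rw [sub_div, sub_smul]; abel
  rw [e]
  apply le_of_sq_le_sq _ (norm_nonneg _)
  rw [norm_sub_sq_real, norm_smul, inner_smul_right, hab, mul_pow, Real.norm_eq_abs, sq_abs]
  have key : (max a 0 - max b 0) ^ 2 ≤ (max a 0 - max b 0) * (a - b) := by
    rcases le_total a 0 with h1 | h1 <;> rcases le_total b 0 with h2 | h2 <;>
      simp only [max_eq_left, max_eq_right, h1, h2] <;> nlinarith
  have e2 : ((max a 0 - max b 0) / ‖s‖ ^ 2) ^ 2 * ‖s‖ ^ 2 = (max a 0 - max b 0) ^ 2 / ‖s‖ ^ 2 := by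
    field_simp
  have e3 : (max a 0 - max b 0) / ‖s‖ ^ 2 * (a - b) = (max a 0 - max b 0) * (a - b) / ‖s‖ ^ 2 := by
    ring
  rw [e2, e3]
  have h1 := div_le_div_of_nonneg_right key hn.le
  have h2 : 0 ≤ (max a 0 - max b 0) ^ 2 / ‖s‖ ^ 2 := by positivity
  linarith

theorem hproj_mem (c : ℝ) (s x w : E) (h : c + ⟪s, w - x⟫ ≤ 0) : hproj c s x w = w := by
  unfold hproj
  rw [max_eq_right h]; simp

theorem hproj_contr {c σ Gg : ℝ} (s x p : E) (hc : 0 < c) (hs : s ≠ 0) (hσ : 0 < σ)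
    (hsG : ‖s‖ ≤ Gg)
    (hp : c + ⟪s, p - x⟫ ≤ 0) (hd : σ * ‖x - p‖ ≤ c) :
    ‖hproj c s x x - p‖ ≤ Real.sqrt (1 - σ ^ 2 / Gg ^ 2) * ‖x - p‖ := by
  have hn : 0 < ‖s‖ := by positivity
  have h1 : ‖hproj c s x x - p‖ ^ 2 ≤ (1 - σ ^ 2 / Gg ^ 2) * ‖x - p‖ ^ 2 := by
    unfold hproj
    rw [sub_self, inner_zero_right, add_zero, max_eq_left hc.le]
    have e : x - (c / ‖s‖ ^ 2) • s - p = (x - p) - (c / ‖s‖ ^ 2) • s := by abel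
    rw [e, norm_sub_sq_real, norm_smul, inner_smul_right, mul_pow, Real.norm_eq_abs, sq_abs]
    have hin : c ≤ ⟪x - p, s⟫ := by
      rw [real_inner_comm, ← neg_sub p x, inner_neg_right]; linarith
    have e2 : (c / ‖s‖ ^ 2) ^ 2 * ‖s‖ ^ 2 = c ^ 2 / ‖s‖ ^ 2 := by field_simp
    have h3 : c ^ 2 / ‖s‖ ^ 2 ≤ c / ‖s‖ ^ 2 * ⟪x - p, s⟫ := by
      calc c ^ 2 / ‖s‖ ^ 2 = c / ‖s‖ ^ 2 * c := by ring
        _ ≤ _ := by gcongr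
    have h4 : σ ^ 2 / Gg ^ 2 * ‖x - p‖ ^ 2 ≤ c ^ 2 / ‖s‖ ^ 2 := by
      calc σ ^ 2 / Gg ^ 2 * ‖x - p‖ ^ 2 = (σ * ‖x - p‖) ^ 2 / Gg ^ 2 := by ring
        _ ≤ c ^ 2 / ‖s‖ ^ 2 := by gcongr
    rw [e2]; linarith
  calc ‖hproj c s x x - p‖ ≤ Real.sqrt ((1 - σ ^ 2 / Gg ^ 2) * ‖x - p‖ ^ 2) :=
        Real.le_sqrt_of_sq_le h1
    _ = _ := by rw [Real.sqrt_mul' _ (sq_nonneg _), Real.sqrt_sq (norm_nonneg _)]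

theorem grad_ineq (f : E → ℝ) (hf : ConvexOn ℝ Set.univ f) (hd : Differentiable ℝ f) (x z : E) :
    f x - f z ≤ ⟪gradient f x, x - z⟫ := by
  have hc : ConvexOn ℝ Set.univ (fun τ : ℝ => f (AffineMap.lineMap x z τ)) := by
    exact hf.comp_affineMap (AffineMap.lineMap x z : ℝ →ᵃ[ℝ] E)
  have h1 : HasDerivAt (fun τ : ℝ => f (AffineMap.lineMap x z τ)) (fderiv ℝ f x (z - x)) 0 := by
    have h2 : HasDerivAt (fun τ : ℝ => (AffineMap.lineMap x z τ : E)) (z - x) 0 :=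
      AffineMap.hasDerivAt_lineMap
    have h3 : HasFDerivAt f (fderiv ℝ f x) ((AffineMap.lineMap x z : ℝ →ᵃ[ℝ] E) 0) := by
      simpa using (hd x).hasFDerivAt
    exact h3.comp_hasDerivAt _ h2
  have := hc.le_slope_of_hasDerivAt (Set.mem_univ 0) (Set.mem_univ 1) zero_lt_one h1
  simp only [slope_def_field, AffineMap.lineMap_apply_one, AffineMap.lineMap_apply_zero] at this
  have e : fderiv ℝ f x (z - x) = ⟪gradient f x, z - x⟫ := by
    rw [← toDual_gradient]; rfl
  rw [e, ← neg_sub x z, inner_neg_right] at this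
  linarith

theorem exists_subgrad (g : E → ℝ) (hg : ConvexOn ℝ Set.univ g) (p : E) {c : ℝ} (hc : 0 ≤ c)
    (h : ∀ z, g p - c * ‖z - p‖ ≤ g z) : ∃ s, IsSubgradAt g p s ∧ ‖s‖ ≤ c := by
  have hcont : Continuous g := hg.locallyLipschitz.continuous
  have hA : Convex ℝ {q : E × ℝ | g q.1 < q.2} := by
    simpa using hg.convex_strict_epigraph
  have hAo : IsOpen {q : E × ℝ | g q.1 < q.2} :=
    isOpen_lt (hcont.comp continuous_fst) continuous_snd
  have hB : Convex ℝ {q : E × ℝ | q.2 ≤ g p - c * ‖q.1 - p‖} := by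
    rintro ⟨z1, r1⟩ h1 ⟨z2, r2⟩ h2 a b ha hb hab
    simp only [Set.mem_ofPred_eq, Prod.smul_mk, Prod.mk_add_mk, smul_eq_mul] at *
    have e : a • z1 + b • z2 - p = a • (z1 - p) + b • (z2 - p) := by
      have : p = (a + b) • p := by rw [hab, one_smul]
      conv_lhs => rw [this]
      rw [add_smul, smul_sub, smul_sub]; abel
    have h3 : ‖a • z1 + b • z2 - p‖ ≤ a * ‖z1 - p‖ + b * ‖z2 - p‖ := by
      rw [e]
      refine (norm_add_le _ _).trans ?_
      rw [norm_smul, norm_smul, Real.norm_of_nonneg ha, Real.norm_of_nonneg hb]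
    have h4 := mul_le_mul_of_nonneg_left h3 hc
    have h5 := mul_le_mul_of_nonneg_left h1 ha
    have h6 := mul_le_mul_of_nonneg_left h2 hb
    have h7 : g p = a * g p + b * g p := by rw [← add_mul, hab, one_mul]
    linarith
  have hdis : Disjoint {q : E × ℝ | g q.1 < q.2} {q : E × ℝ | q.2 ≤ g p - c * ‖q.1 - p‖} := by
    rw [Set.disjoint_left]
    rintro ⟨z, r⟩ h1 h2
    simp only [Set.mem_ofPred_eq] at *
    linarith [h z]
  obtain ⟨φ, u, h1, h2⟩ := geometric_hahn_banach_open hA hAo hB hdis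
  set ℓ : E →L[ℝ] ℝ := φ.comp (ContinuousLinearMap.inl ℝ E ℝ) with hℓ
  set β : ℝ := φ (0, 1) with hβ
  have hφ : ∀ z r, φ (z, r) = ℓ z + β * r := by
    intro z r
    have : ((z, r) : E × ℝ) = (z, 0) + r • (0, 1) := by simp
    rw [this, map_add, map_smul, smul_eq_mul, mul_comm]
    rfl
  have h1' : ∀ z r, g z < r → ℓ z + β * r < u := fun z r hz => by
    rw [← hφ]; exact h1 (z, r) hz
  have h2' : ∀ z r, r ≤ g p - c * ‖z - p‖ → u ≤ ℓ z + β * r := fun z r hz => by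
    rw [← hφ]; exact h2 (z, r) hz
  have hu := h2' p (g p) (by simp)
  have hβneg : β < 0 := by
    have := h1' p (g p + 1) (by linarith)
    nlinarith
  have h1'' : ∀ z, ℓ z + β * g z ≤ u := by
    intro z
    apply le_of_forall_pos_le_add
    intro δ hδ
    have := h1' z (g z + δ / (-β)) (by have : 0 < δ / (-β) := div_pos hδ (by linarith)
                                       linarith)
    have e : β * (g z + δ / (-β)) = β * g z - δ := by
      have hb0 : β ≠ 0 := hβneg.ne
      field_simp
      ring
    rw [e] at this; linarith
  have hsv : ∀ v, ⟪(-β)⁻¹ • (InnerProductSpace.toDual ℝ E).symm ℓ, v⟫ = (-β)⁻¹ * ℓ v := by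
    intro v
    rw [inner_smul_left, InnerProductSpace.toDual_symm_apply]; simp
  set s := (-β)⁻¹ • (InnerProductSpace.toDual ℝ E).symm ℓ with hs
  have hβ' : 0 < -β := by linarith
  refine ⟨s, ?_, ?_⟩
  · unfold IsSubgradAt
    intro z
    rw [hsv, map_sub]
    have := h1'' z
    have h3 : (-β)⁻¹ * (ℓ z - ℓ p) ≤ g z - g p := by
      rw [inv_mul_le_iff₀ hβ']; linarith
    linarith
  · have h3 := h2' (p - s) (g p - c * ‖(p - s) - p‖) le_rfl
    have h4 := h1'' p
    have e : ‖(p - s) - p‖ = ‖s‖ := by simp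
    rw [e, map_sub] at h3
    have h5 : (-β)⁻¹ * ℓ s ≤ c * ‖s‖ := by
      rw [inv_mul_le_iff₀ hβ']; linarith
    rw [← hsv, real_inner_self_eq_norm_sq] at h5
    by_contra hcon
    push Not at hcon
    nlinarith

theorem err1 (g : E → ℝ) (hg : ConvexOn ℝ Set.univ g) {ε σ : ℝ}
    (hA4 : ∀ z : E, g z = -ε → ∀ sz, IsSubgradAt g z sz → σ ≤ ‖sz‖)
    (x p : E) (hx : -ε < g x) (hp : g p ≤ -ε) (hmin : ∀ z, g z ≤ -ε → ‖x - p‖ ≤ ‖x - z‖) :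
    g p = -ε ∧ σ * ‖x - p‖ ≤ g x + ε := by
  have hne : x ≠ p := by rintro rfl; linarith
  have hn : 0 < ‖x - p‖ := norm_pos_iff.2 (sub_ne_zero.2 hne)
  set c := (g x + ε) / ‖x - p‖ with hc
  have ha : 0 < g x + ε := by linarith
  have hc0 : 0 < c := by positivity
  have hca : c * ‖x - p‖ = g x + ε := by rw [hc]; field_simp
  have key : ∀ z, -ε - c * ‖z - p‖ ≤ g z := by
    intro z
    by_contra hcon
    push Not at hcon
    have hnn := norm_nonneg (z - p)
    set a := g x + ε with haa
    set b := -ε - g z with hbb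
    have hb : c * ‖z - p‖ < b := by linarith
    have hb0 : 0 < b := lt_of_le_of_lt (by positivity) hb
    have hab : a * ‖z - p‖ < b * ‖x - p‖ := by
      rw [← hca]; nlinarith
    have hs : 0 < a + b := by linarith
    have hsum : a / (a + b) + b / (a + b) = 1 := by field_simp
    have hw := hg.2 (Set.mem_univ z) (Set.mem_univ x) (show 0 ≤ a / (a + b) by positivity)
      (show 0 ≤ b / (a + b) by positivity) hsum
    have e1 : (a / (a + b)) • g z + (b / (a + b)) • g x = -ε := by
      have hgz : g z = -ε - b := by rw [hbb]; ring
      have hgx : g x = a - ε := by rw [haa]; ring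
      rw [hgz, hgx, smul_eq_mul, smul_eq_mul]; field_simp; ring
    rw [e1] at hw
    have h1 := hmin _ hw
    have e2 : x - ((a / (a + b)) • z + (b / (a + b)) • x) = (a / (a + b)) • (x - z) := by
      have : b / (a + b) = 1 - a / (a + b) := by linarith
      rw [this, sub_smul, one_smul, smul_sub]; abel
    rw [e2, norm_smul, Real.norm_of_nonneg (by positivity), div_mul_eq_mul_div,
      le_div_iff₀ hs] at h1
    have h2 : ‖x - z‖ ≤ ‖x - p‖ + ‖z - p‖ := by
      rw [norm_sub_rev z p]; exact norm_sub_le_norm_sub_add_norm_sub x p z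
    nlinarith
  have hgp : g p = -ε := le_antisymm hp (by simpa using key p)
  refine ⟨hgp, ?_⟩
  obtain ⟨s, hs, hsc⟩ := exists_subgrad g hg p hc0.le (fun z => by rw [hgp]; exact key z)
  have := (hA4 p hgp s hs).trans hsc
  rw [← hca]; gcongr

theorem exists_closest (g : E → ℝ) (hg : ConvexOn ℝ Set.univ g) (r : ℝ) (hne : ∃ z, g z ≤ r)
    (x : E) : ∃ p, g p ≤ r ∧ ∀ z, g z ≤ r → ‖x - p‖ ≤ ‖x - z‖ := by
  have hcont : Continuous g := hg.locallyLipschitz.continuous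
  have hcl : IsClosed {z | g z ≤ r} := isClosed_le hcont continuous_const
  obtain ⟨p, hp, hd⟩ := hcl.exists_infDist_eq_dist hne x
  refine ⟨p, hp, fun z hz => ?_⟩
  rw [← dist_eq_norm, ← dist_eq_norm, ← hd]
  exact Metric.infDist_le_dist_of_mem hz

theorem err2 (g : E → ℝ) (hg : ConvexOn ℝ Set.univ g) {ε σ : ℝ} (hε : 0 < ε) (hσ : 0 < σ)
    (hA4ne : ∃ z, g z = -ε)
    (hA4 : ∀ z : E, g z = -ε → ∀ sz, IsSubgradAt g z sz → σ ≤ ‖sz‖)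
    (x : E) (hx : 0 < g x) : ∃ q, g q ≤ 0 ∧ σ * ‖x - q‖ ≤ g x := by
  have hcont : Continuous g := hg.locallyLipschitz.continuous
  obtain ⟨z0, hz0⟩ := hA4ne
  obtain ⟨p, hp, hmin⟩ := exists_closest g hg (-ε) ⟨z0, hz0.le⟩ x
  have hcl : ContinuousOn (fun τ : ℝ => g (p + τ • (x - p))) (Set.Icc 0 1) := by
    fun_prop
  obtain ⟨τ, ⟨h0, h1⟩, hτ⟩ := intermediate_value_Icc zero_le_one hcl
    (show (0 : ℝ) ∈ Set.Icc _ _ by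
      constructor
      · simp; linarith
      · simp; linarith)
  simp only at hτ
  set q := p + τ • (x - p) with hq
  have hqp : ‖q - p‖ = τ * ‖x - p‖ := by
    rw [hq, add_sub_cancel_left, norm_smul, Real.norm_of_nonneg h0]
  have hxq : ‖x - q‖ = (1 - τ) * ‖x - p‖ := by
    have : x - q = (1 - τ) • (x - p) := by rw [hq, sub_smul, one_smul]; abel
    rw [this, norm_smul, Real.norm_of_nonneg (by linarith)]
  obtain ⟨hgp, hE⟩ := err1 g hg hA4 q p (by linarith) hp (fun z hz => by
    have := hmin z hz
    have h3 := norm_sub_le_norm_sub_add_norm_sub x q z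
    linarith)
  have hτ0 : 0 < τ := by
    rcases h0.eq_or_lt with h | h
    · exfalso
      rw [← h] at hq
      simp at hq
      rw [hq] at hτ; linarith
    · exact h
  refine ⟨q, hτ.le, ?_⟩
  have hcv := hg.2 (Set.mem_univ p) (Set.mem_univ x) (show 0 ≤ 1 - τ by linarith) h0
    (by ring)
  have e : (1 - τ) • p + τ • x = q := by rw [hq, sub_smul, one_smul, smul_sub]; abel
  rw [e, hτ, hgp, smul_eq_mul, smul_eq_mul] at hcv
  rw [hxq]
  rw [hτ, hqp] at hE
  have h4 : (1 - τ) * (σ * (τ * ‖x - p‖)) ≤ (1 - τ) * (0 + ε) :=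
    mul_le_mul_of_nonneg_left hE (by linarith)
  have h5 : τ * (σ * ((1 - τ) * ‖x - p‖)) ≤ τ * g x := by nlinarith
  exact le_of_mul_le_mul_left h5 hτ0

end helpers

theorem stmt7 {d T : ℕ} (hT : 1 ≤ T)
    {R Gf Gg ε σ η ρ : ℝ}
    (g : EuclideanSpace ℝ (Fin d) → ℝ)
    (f : ℕ → EuclideanSpace ℝ (Fin d) → ℝ)
    (x y s : ℕ → EuclideanSpace ℝ (Fin d))
    (hR : 0 < R) (hGf : 0 < Gf) (hGg : 0 < Gg)
    (hgconv : ConvexOn ℝ Set.univ g)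
    (hA1 : {z : EuclideanSpace ℝ (Fin d) | g z ≤ 0} ⊆ Metric.closedBall 0 R)
    (hfconv : ∀ t ∈ Finset.Icc 1 T, ConvexOn ℝ Set.univ (f t))
    (hfdiff : ∀ t ∈ Finset.Icc 1 T, Differentiable ℝ (f t))
    (hA2 : ∀ t ∈ Finset.Icc 1 T, ∀ z ∈ Metric.closedBall (0 : EuclideanSpace ℝ (Fin d)) R,
      ‖gradient (f t) z‖ ≤ Gf)
    (hA3 : ∀ z ∈ Metric.closedBall (0 : EuclideanSpace ℝ (Fin d)) R,
      ∀ sz, IsSubgradAt g z sz → ‖sz‖ ≤ Gg)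
    (hσ : 0 < σ) (hε : 0 < ε) (hσGg : σ ≤ Gg)
    (hA4ne : ∃ z, g z = -ε)
    (hA4 : ∀ z : EuclideanSpace ℝ (Fin d), g z = -ε → ∀ sz, IsSubgradAt g z sz → σ ≤ ‖sz‖)
    (hx1 : x 1 ∈ Metric.closedBall (0 : EuclideanSpace ℝ (Fin d)) R)
    (hηdef : η = 2 * R / (Gf * Real.sqrt T))
    (hρdef : ρ = 0)
    (hs : ∀ t ∈ Finset.Icc 1 T, IsSubgradAt g (x t) (s t))
    (hy : ∀ t ∈ Finset.Icc 1 T, y t = x t - η • gradient (f t) (x t))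
    (hupd : ∀ t ∈ Finset.Icc 1 T,
      x (t + 1) = if s t ≠ 0 then
          projBall R (y t - ((max (g (x t) + ⟪s t, y t - x t⟫ + ρ) 0) / ‖s t‖ ^ 2) • s t)
        else projBall R (y t))
    :
    (∀ xstar : EuclideanSpace ℝ (Fin d), g xstar ≤ 0 →
      ∑ t ∈ Finset.Icc 1 T, (f t (x t) - f t xstar) ≤ 2 * R * Gf * Real.sqrt T) ∧
    (∀ t ∈ Finset.Icc 1 T,
      g (x t) ≤ 2 * R * Gg * Real.exp (-(σ ^ 2 * ((t : ℝ) - 1)) / (2 * Gg ^ 2)) +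
        2 * R * Gg / ((1 - Real.sqrt (1 - σ ^ 2 / Gg ^ 2)) * Real.sqrt T)) := by
  subst hρdef
  simp only [add_zero] at hupd
  have hT0 : (0 : ℝ) < T := by exact_mod_cast hT
  have hsT : 0 < Real.sqrt T := Real.sqrt_pos.2 hT0
  have hη : 0 < η := by rw [hηdef]; positivity
  have hηG : η * Gf = 2 * R / Real.sqrt T := by rw [hηdef]; field_simp
  have hX : ∀ w, g w ≤ 0 → ‖w‖ ≤ R := fun w hw => by
    have := hA1 hw
    simpa using this
  have hball : ∀ t ∈ Finset.Icc 1 T, ‖x t‖ ≤ R := by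
    intro t ht
    rw [Finset.mem_Icc] at ht
    rcases ht.1.eq_or_lt with h | h
    · rw [← h]; simpa using hx1
    · obtain ⟨k, rfl⟩ : ∃ k, t = k + 1 := ⟨t - 1, by omega⟩
      rw [hupd k (Finset.mem_Icc.2 ⟨by omega, by omega⟩)]
      split_ifs <;> exact norm_projBall_le hR _
  have hgrad : ∀ t ∈ Finset.Icc 1 T, ‖gradient (f t) (x t)‖ ≤ Gf := fun t ht =>
    hA2 t ht _ (by simpa using hball t ht)
  have hyx : ∀ t ∈ Finset.Icc 1 T, ‖y t - x t‖ ≤ η * Gf := by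
    intro t ht
    rw [hy t ht, sub_sub_cancel_left, norm_neg, norm_smul, Real.norm_of_nonneg hη.le]
    exact mul_le_mul_of_nonneg_left (hgrad t ht) hη.le
  have hhalf : ∀ t ∈ Finset.Icc 1 T, ∀ w, g w ≤ 0 → g (x t) + ⟪s t, w - x t⟫ ≤ 0 :=
    fun t ht w hw => (hs t ht w).trans hw
  have hA : ∀ t ∈ Finset.Icc 1 T, ∀ w, g w ≤ 0 → ‖x (t + 1) - w‖ ≤ ‖y t - w‖ := by
    intro t ht w hw
    rw [hupd t ht]
    split_ifs with h
    · refine (projBall_dist hR _ w (hX w hw)).trans ?_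
      have := hproj_nonexp (g (x t)) (s t) (x t) (y t) w h
      rwa [hproj_mem _ _ _ _ (hhalf t ht w hw)] at this
    · exact projBall_dist hR _ w (hX w hw)
  have hB : ∀ t ∈ Finset.Icc 1 T, ∀ w, g w ≤ 0 → (∀ z, g z ≤ 0 → ‖x t - w‖ ≤ ‖x t - z‖) →
      ‖x (t + 1) - w‖ ≤ Real.sqrt (1 - σ ^ 2 / Gg ^ 2) * ‖x t - w‖ + η * Gf := by
    intro t ht w hw hmin
    rcases le_or_gt (g (x t)) 0 with h0 | h0
    · have := hmin _ h0
      rw [sub_self, norm_zero] at this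
      have hxw : x t = w := sub_eq_zero.1 (norm_le_zero_iff.1 this)
      have h1 := hA t ht w hw
      have h2 := hyx t ht
      rw [hxw] at h2 ⊢
      rw [sub_self, norm_zero, mul_zero, zero_add]
      exact h1.trans h2
    · have hsne : s t ≠ 0 := by
        intro h
        have := hhalf t ht w hw
        rw [h, inner_zero_left] at this
        linarith
      obtain ⟨q, hq, hqd⟩ := err2 g hgconv hε hσ hA4ne hA4 (x t) h0
      have hd : σ * ‖x t - w‖ ≤ g (x t) :=
        (mul_le_mul_of_nonneg_left (hmin q hq) hσ.le).trans hqd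
      have hsG := hA3 (x t) (by simpa using hball t ht) (s t) (hs t ht)
      have h1 := hproj_contr (s t) (x t) w h0 hsne hσ hsG (hhalf t ht w hw) hd
      have h2 := (hproj_nonexp (g (x t)) (s t) (x t) (y t) (x t) hsne).trans (hyx t ht)
      rw [hupd t ht, if_pos hsne]
      refine (projBall_dist hR _ w (hX w hw)).trans ?_
      have h3 := norm_sub_le_norm_sub_add_norm_sub (hproj (g (x t)) (s t) (x t) (y t))
        (hproj (g (x t)) (s t) (x t) (x t)) w
      change ‖hproj (g (x t)) (s t) (x t) (y t) - w‖ ≤ _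
      linarith
  constructor
  · intro w hw
    have hone : ∀ t ∈ Finset.Icc 1 T, f t (x t) - f t w ≤
        (‖x t - w‖ ^ 2 / (2 * η) - ‖x (t + 1) - w‖ ^ 2 / (2 * η)) + η * Gf ^ 2 / 2 := by
      intro t ht
      have h1 := grad_ineq (f t) (hfconv t ht) (hfdiff t ht) (x t) w
      have h2 := hA t ht w hw
      have h3 : ‖x (t + 1) - w‖ ^ 2 ≤ ‖y t - w‖ ^ 2 := by gcongr
      have e : y t - w = (x t - w) - η • gradient (f t) (x t) := by rw [hy t ht]; abel
      rw [e, norm_sub_sq_real (x t - w), norm_smul, inner_smul_right, mul_pow, Real.norm_eq_abs, sq_abs,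
        real_inner_comm] at h3
      have h4 : ‖gradient (f t) (x t)‖ ^ 2 ≤ Gf ^ 2 := by
        have := hgrad t ht
        gcongr
      have h5 : η ^ 2 * ‖gradient (f t) (x t)‖ ^ 2 ≤ η ^ 2 * Gf ^ 2 := by gcongr
      refine h1.trans ?_
      rw [← sub_div, div_add_div _ _ (by positivity) (by norm_num), le_div_iff₀ (by positivity)]
      nlinarith
    have htel : ∀ n : ℕ, ∑ t ∈ Finset.Icc 1 n,
        (‖x t - w‖ ^ 2 / (2 * η) - ‖x (t + 1) - w‖ ^ 2 / (2 * η))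
        = ‖x 1 - w‖ ^ 2 / (2 * η) - ‖x (n + 1) - w‖ ^ 2 / (2 * η) := by
      intro n
      induction n with
      | zero => simp
      | succ k ih => rw [Finset.sum_Icc_succ_top (by omega), ih]; ring
    have hsum := Finset.sum_le_sum hone
    rw [Finset.sum_add_distrib, htel, Finset.sum_const, Nat.card_Icc, nsmul_eq_mul,
      Nat.add_sub_cancel] at hsum
    have h1 : ‖x 1 - w‖ ≤ 2 * R := by
      have := norm_sub_le (x 1) w
      have h2 := hX w hw
      have h3 := hball 1 (Finset.mem_Icc.2 ⟨le_rfl, hT⟩)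
      linarith
    have h2 : ‖x 1 - w‖ ^ 2 / (2 * η) ≤ (2 * R) ^ 2 / (2 * η) := by gcongr
    have h3 : 0 ≤ ‖x (T + 1) - w‖ ^ 2 / (2 * η) := by positivity
    have hsq : Real.sqrt T ^ 2 = T := Real.sq_sqrt hT0.le
    have e1 : (2 * R) ^ 2 / (2 * η) = R * Gf * Real.sqrt T := by
      rw [hηdef]; field_simp; try ring
    have e2 : (T : ℝ) * (η * Gf ^ 2 / 2) = R * Gf * Real.sqrt T := by
      rw [hηdef]
      nth_rewrite 1 [← hsq]
      field_simp
    linarith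
  · have hu1 : σ ^ 2 / Gg ^ 2 ≤ 1 := by
      rw [div_le_one (by positivity)]; gcongr
    have hu0 : 0 < σ ^ 2 / Gg ^ 2 := by positivity
    set κ := Real.sqrt (1 - σ ^ 2 / Gg ^ 2) with hκ
    have hκ0 : 0 ≤ κ := Real.sqrt_nonneg _
    have hκ1 : κ < 1 := by
      rw [hκ, Real.sqrt_lt' one_pos]; linarith
    have hξ : 0 < 1 - κ := by linarith
    have hκe : κ ≤ Real.exp (-(σ ^ 2 / Gg ^ 2) / 2) := by
      rw [Real.exp_half]
      apply Real.sqrt_le_sqrt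
      have := Real.add_one_le_exp (-(σ ^ 2 / Gg ^ 2))
      linarith
    have hXne : ∃ z, g z ≤ 0 := by
      obtain ⟨z, hz⟩ := hA4ne
      exact ⟨z, by linarith⟩
    have hind : ∀ n : ℕ, n + 1 ≤ T → ∃ p, g p ≤ 0 ∧
        ‖x (n + 1) - p‖ ≤ 2 * R * κ ^ n + η * Gf / (1 - κ) := by
      intro n
      induction n with
      | zero =>
        intro _
        obtain ⟨z, hz⟩ := hXne
        refine ⟨z, hz, ?_⟩
        have := norm_sub_le (x 1) z
        have h2 := hX z hz
        have h3 := hball 1 (Finset.mem_Icc.2 ⟨le_rfl, hT⟩)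
        have h4 : 0 ≤ η * Gf / (1 - κ) := by positivity
        simp only [zero_add, pow_zero, mul_one]
        linarith
      | succ k ih =>
        intro hk
        obtain ⟨p, hp, hpd⟩ := ih (by omega)
        obtain ⟨q, hq, hmin⟩ := exists_closest g hgconv 0 hXne (x (k + 1))
        refine ⟨q, hq, ?_⟩
        have h1 := hB (k + 1) (Finset.mem_Icc.2 ⟨by omega, by omega⟩) q hq hmin
        have h2 := mul_le_mul_of_nonneg_left ((hmin p hp).trans hpd) hκ0
        have e : κ * (2 * R * κ ^ k + η * Gf / (1 - κ)) + η * Gf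
            = 2 * R * κ ^ (k + 1) + η * Gf / (1 - κ) := by
          field_simp; ring
        linarith
    intro t ht
    have ht' := Finset.mem_Icc.1 ht
    obtain ⟨n, rfl⟩ : ∃ n, t = n + 1 := ⟨t - 1, by omega⟩
    obtain ⟨p, hp, hpd⟩ := hind n ht'.2
    have hsG := hA3 (x (n + 1)) (by simpa using hball _ ht) _ (hs _ ht)
    have h1 := hhalf _ ht p hp
    have h2 : g (x (n + 1)) ≤ Gg * ‖x (n + 1) - p‖ := by
      have h3 : ⟪s (n + 1), x (n + 1) - p⟫ ≤ ‖s (n + 1)‖ * ‖x (n + 1) - p‖ :=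
        real_inner_le_norm _ _
      have h4 : ‖s (n + 1)‖ * ‖x (n + 1) - p‖ ≤ Gg * ‖x (n + 1) - p‖ := by gcongr
      rw [← neg_sub, inner_neg_right] at h1
      linarith
    have h5 : κ ^ n ≤ Real.exp (-(σ ^ 2 * (((n + 1 : ℕ) : ℝ) - 1)) / (2 * Gg ^ 2)) := by
      calc κ ^ n ≤ Real.exp (-(σ ^ 2 / Gg ^ 2) / 2) ^ n := by gcongr
        _ = _ := by
          rw [← Real.exp_nat_mul]
          congr 1
          push_cast
          field_simp
          try ring
    calc g (x (n + 1)) ≤ Gg * ‖x (n + 1) - p‖ := h2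
      _ ≤ Gg * (2 * R * κ ^ n + η * Gf / (1 - κ)) := by gcongr
      _ = 2 * R * Gg * κ ^ n + 2 * R * Gg / ((1 - κ) * Real.sqrt T) := by
        rw [hηG]; field_simp
      _ ≤ _ := by gcongr
end
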